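/- arXiv:2009.03549 — 4 statements merged into one kernel-verified Lean document; each statement's English description precedes it below -/
import Mathlib

section
/- For every real number r > 0 and every real α with −r < α < r, one has ∫₀^∞ (u/(1+u²))^r · u^{α−1} du ≤ 2r/(r² − α²). -/
open MeasureTheory

/-!
Since `1 + u² ≥ max 1 (u²)`, the kernel `u / (1 + u²)` is at most `min u u⁻¹`, and the bound is
the exact value of the integral once the kernel is replaced by `min u u⁻¹`: the ranges `(0, 1]`
and `(1, ∞)` contribute `1 / (r + α)` and `1 / (r - α)`.
-/

lemma div_one_add_sq_le_min_self_inv {K : Type*} [Field K] [LinearOrder K] [IsStrictOrderedRing K]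
    {u : K} (hu : 0 ≤ u) : u / (1 + u ^ 2) ≤ min u u⁻¹ := by
  refine le_min (div_le_self hu (le_add_of_nonneg_right (sq_nonneg u))) ?_
  obtain rfl | hu_pos := hu.eq_or_lt
  · simp
  · rw [div_le_iff₀ (by positivity), inv_mul_eq_div, le_div_iff₀ hu_pos, ← sq]
    exact le_add_of_nonneg_left zero_le_one

section PowerIntegrals

variable {s a : ℝ}

lemma lintegral_Ioc_zero_rpow (hs : -1 < s) (ha : 0 ≤ a) :
    ∫⁻ u in Set.Ioc 0 a, ENNReal.ofReal (u ^ s) = ENNReal.ofReal (a ^ (s + 1) / (s + 1)) := by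
  have integrable : IntegrableOn (fun u : ℝ => u ^ s) (Set.Ioc 0 a) :=
    (intervalIntegrable_iff_integrableOn_Ioc_of_le ha).1
      (intervalIntegral.intervalIntegrable_rpow' hs)
  have nonneg : ∀ᵐ u ∂volume.restrict (Set.Ioc 0 a), 0 ≤ u ^ s :=
    ae_restrict_of_forall_mem measurableSet_Ioc fun u hu => Real.rpow_nonneg hu.1.le s
  rw [← ofReal_integral_eq_lintegral_ofReal integrable nonneg,
    ← intervalIntegral.integral_of_le ha, integral_rpow (Or.inl hs),
    Real.zero_rpow (by linarith), sub_zero]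

lemma lintegral_Ioi_rpow_of_lt (hs : s < -1) (ha : 0 < a) :
    ∫⁻ u in Set.Ioi a, ENNReal.ofReal (u ^ s) = ENNReal.ofReal (-a ^ (s + 1) / (s + 1)) := by
  have nonneg : ∀ᵐ u ∂volume.restrict (Set.Ioi a), 0 ≤ u ^ s :=
    ae_restrict_of_forall_mem measurableSet_Ioi fun u hu => Real.rpow_nonneg (ha.trans hu).le s
  rw [← ofReal_integral_eq_lintegral_ofReal (integrableOn_Ioi_rpow_of_lt hs ha) nonneg,
    integral_Ioi_rpow_of_lt hs ha]

end PowerIntegrals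

section MinKernel

variable {r α : ℝ}

lemma lintegral_Ioc_zero_one_min_self_inv_rpow_mul_rpow (hα : -r < α) :
    ∫⁻ u in Set.Ioc (0 : ℝ) 1, ENNReal.ofReal (min u u⁻¹ ^ r * u ^ (α - 1)) =
      ENNReal.ofReal (1 / (r + α)) := by
  have integrand_eq : ∀ u ∈ Set.Ioc (0 : ℝ) 1, min u u⁻¹ ^ r * u ^ (α - 1) = u ^ (r + α - 1) := by
    intro u ⟨hu, hu_le⟩
    rw [min_eq_left (hu_le.trans ((one_le_inv₀ hu).2 hu_le)), ← Real.rpow_add hu, add_sub_assoc]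
  rw [setLIntegral_congr_fun measurableSet_Ioc fun u hu => congrArg ENNReal.ofReal
      (integrand_eq u hu),
    lintegral_Ioc_zero_rpow (by linarith) zero_le_one, Real.one_rpow, sub_add_cancel]

lemma lintegral_Ioi_one_min_self_inv_rpow_mul_rpow (hα : α < r) :
    ∫⁻ u in Set.Ioi (1 : ℝ), ENNReal.ofReal (min u u⁻¹ ^ r * u ^ (α - 1)) =
      ENNReal.ofReal (1 / (r - α)) := by
  have integrand_eq : ∀ u ∈ Set.Ioi (1 : ℝ), min u u⁻¹ ^ r * u ^ (α - 1) = u ^ (α - r - 1) := by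
    intro u (hu : 1 < u)
    have hu_pos : 0 < u := one_pos.trans hu
    rw [min_eq_right ((inv_le_one_of_one_le₀ hu.le).trans hu.le), Real.inv_rpow hu_pos.le,
      ← Real.rpow_neg hu_pos.le, ← Real.rpow_add hu_pos]
    ring_nf
  rw [setLIntegral_congr_fun measurableSet_Ioi fun u hu => congrArg ENNReal.ofReal
      (integrand_eq u hu),
    lintegral_Ioi_rpow_of_lt (by linarith) one_pos, Real.one_rpow, sub_add_cancel,
    neg_div, ← div_neg, neg_sub]

lemma lintegral_Ioi_zero_min_self_inv_rpow_mul_rpow (hα₁ : -r < α) (hα₂ : α < r) :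
    ∫⁻ u in Set.Ioi (0 : ℝ), ENNReal.ofReal (min u u⁻¹ ^ r * u ^ (α - 1)) =
      ENNReal.ofReal (2 * r / (r ^ 2 - α ^ 2)) := by
  have hadd : 0 < r + α := by linarith
  have hsub : 0 < r - α := by linarith
  have partial_fractions : 1 / (r + α) + 1 / (r - α) = 2 * r / (r ^ 2 - α ^ 2) := by
    rw [div_add_div _ _ hadd.ne' hsub.ne', sq_sub_sq]
    ring
  rw [← Set.Ioc_union_Ioi_eq_Ioi zero_le_one,
    lintegral_union measurableSet_Ioi (Set.Ioc_disjoint_Ioi le_rfl),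
    lintegral_Ioc_zero_one_min_self_inv_rpow_mul_rpow hα₁,
    lintegral_Ioi_one_min_self_inv_rpow_mul_rpow hα₂,
    ← ENNReal.ofReal_add (by positivity) (by positivity), partial_fractions]

end MinKernel

/-- For every real `r > 0` and every real `α` with `-r < α < r`,
`∫₀^∞ (u/(1+u²))^r · u^{α−1} du ≤ 2r/(r² − α²)`. -/
theorem stmt0 (r α : ℝ) (hr : 0 < r) (hα₁ : -r < α) (hα₂ : α < r) :
    ∫⁻ u in Set.Ioi (0 : ℝ),
        ENNReal.ofReal ((u / (1 + u ^ 2)) ^ r * u ^ (α - 1)) ≤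
      ENNReal.ofReal (2 * r / (r ^ 2 - α ^ 2)) := by
  rw [← lintegral_Ioi_zero_min_self_inv_rpow_mul_rpow hα₁ hα₂]
  refine setLIntegral_mono' measurableSet_Ioi fun u hu => ENNReal.ofReal_le_ofReal ?_
  have hu_pos : 0 < u := hu
  gcongr
  exact div_one_add_sq_le_min_self_inv hu_pos.le
end

section
/- Let r > 0, let α ∈ (−r, r), let q ∈ [1,∞], and let f : (0,1] → ℝ be measurable. Then ‖ u ↦ u^{−α} ∫₀¹ (tu/(t+u)²)^r |f(t)| dt/t ‖_{L^q((0,1], du/u)} ≤ (2r/(r² − α²)) · ‖ u ↦ u^{−α} f(u) ‖_{L^q((0,1], du/u)}. -/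
/-!
After conjugation by the weight `u^{-α}` the operator has the kernel
`K(u,t) = (t/u)^α (tu/(t+u)²)^r` with respect to `dt/t`. Since `tu/(t+u)² ≤ min(t/u, u/t)`, its row
integrals over `(0,∞)` are at most
`∫₀^u (t/u)^{r+α} dt/t + ∫_u^∞ (u/t)^{r-α} dt/t = 1/(r+α) + 1/(r-α) = 2r/(r²-α²)`.
Exchanging `t` and `u` amounts to replacing `α` by `-α`, so the column integrals obey the same
bound, and Schur's test gives the claim, for every measure dominated by `dt/t` on `(0,∞)`.
-/

open MeasureTheory
open scoped ENNReal NNReal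

/-- The measure `dt/t` on the interval `(0,1] ⊆ ℝ`. -/
noncomputable def haarIoc : Measure ℝ :=
  (volume.restrict (Set.Ioc (0 : ℝ) 1)).withDensity fun t => ENNReal.ofReal t⁻¹

/-- The `L^q` norm on `(0,1]` with respect to the measure `dt/t`, for `q ∈ [1,∞]`:
the essential supremum if `q = ∞`, and `(∫₀¹ g(t)^q dt/t)^{1/q}` otherwise. -/
noncomputable def lqNorm (q : ℝ≥0∞) (g : ℝ → ℝ≥0∞) : ℝ≥0∞ :=
  if q = ⊤ then essSup g haarIoc
  else (∫⁻ t, g t ^ q.toReal ∂haarIoc) ^ (1 / q.toReal)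

section SchurTest

variable {X Y : Type*} [MeasurableSpace X] [MeasurableSpace Y] {μ : Measure X} {ν : Measure Y}

lemma rpow_lintegral_mul_le {k g : Y → ℝ≥0∞} (hk : AEMeasurable k ν) (hg : AEMeasurable g ν)
    {p : ℝ} (hp : 1 ≤ p) :
    (∫⁻ y, k y * g y ∂ν) ^ p ≤ (∫⁻ y, k y ∂ν) ^ (p - 1) * ∫⁻ y, k y * g y ^ p ∂ν := by
  have hp₀ : 0 < p := by linarith
  have hp₁ : 0 ≤ 1 - p⁻¹ := sub_nonneg.2 (inv_le_one_of_one_le₀ hp)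
  have hsplit (y : Y) : k y * g y = k y ^ (1 - p⁻¹) * (k y * g y ^ p) ^ p⁻¹ := by
    rw [ENNReal.mul_rpow_of_nonneg _ _ (by positivity), ENNReal.rpow_rpow_inv hp₀.ne', ← mul_assoc,
      ← ENNReal.rpow_add_of_nonneg _ _ hp₁ (by positivity), sub_add_cancel, ENNReal.rpow_one]
  have hholder : ∫⁻ y, k y * g y ∂ν ≤
      (∫⁻ y, k y ∂ν) ^ (1 - p⁻¹) * (∫⁻ y, k y * g y ^ p ∂ν) ^ p⁻¹ := by
    simp_rw [hsplit]
    exact ENNReal.lintegral_mul_norm_pow_le hk (hk.mul (hg.pow_const p)) hp₁ (by positivity)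
      (sub_add_cancel 1 p⁻¹)
  calc (∫⁻ y, k y * g y ∂ν) ^ p
      ≤ ((∫⁻ y, k y ∂ν) ^ (1 - p⁻¹) * (∫⁻ y, k y * g y ^ p ∂ν) ^ p⁻¹) ^ p := by gcongr
    _ = (∫⁻ y, k y ∂ν) ^ (p - 1) * ∫⁻ y, k y * g y ^ p ∂ν := by
      rw [ENNReal.mul_rpow_of_nonneg _ _ hp₀.le, ENNReal.rpow_inv_rpow hp₀.ne', ← ENNReal.rpow_mul,
        sub_mul, one_mul, inv_mul_cancel₀ hp₀.ne']

variable {K : X → Y → ℝ≥0∞} {g : Y → ℝ≥0∞} {A B : ℝ≥0∞}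

lemma lintegral_lintegral_mul_le_of_lintegral_col_le [SFinite μ] [SFinite ν]
    (hK : AEMeasurable (Function.uncurry K) (μ.prod ν)) (hg : AEMeasurable g ν)
    (hcol : ∀ᵐ y ∂ν, ∫⁻ x, K x y ∂μ ≤ B) :
    ∫⁻ x, ∫⁻ y, K x y * g y ∂ν ∂μ ≤ B * ∫⁻ y, g y ∂ν := by
  calc ∫⁻ x, ∫⁻ y, K x y * g y ∂ν ∂μ
      = ∫⁻ y, ∫⁻ x, K x y * g y ∂μ ∂ν := lintegral_lintegral_swap (hK.mul hg.comp_snd)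
    _ ≤ ∫⁻ y, B * g y ∂ν := by
      refine lintegral_mono_ae ?_
      filter_upwards [hK.prod_swap.aestronglyMeasurable.prodMk_left, hcol] with y hKy hy
      rw [lintegral_mul_const'' (f := fun x => K x y) _ hKy.aemeasurable]
      gcongr
    _ = B * ∫⁻ y, g y ∂ν := lintegral_const_mul'' B hg

lemma lintegral_rpow_lintegral_mul_le [SFinite μ] [SFinite ν]
    (hK : AEMeasurable (Function.uncurry K) (μ.prod ν)) (hg : AEMeasurable g ν)
    (hrow : ∀ᵐ x ∂μ, ∫⁻ y, K x y ∂ν ≤ A) (hcol : ∀ᵐ y ∂ν, ∫⁻ x, K x y ∂μ ≤ B)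
    {p : ℝ} (hp : 1 ≤ p) :
    ∫⁻ x, (∫⁻ y, K x y * g y ∂ν) ^ p ∂μ ≤ A ^ (p - 1) * B * ∫⁻ y, g y ^ p ∂ν := by
  calc ∫⁻ x, (∫⁻ y, K x y * g y ∂ν) ^ p ∂μ
      ≤ ∫⁻ x, A ^ (p - 1) * ∫⁻ y, K x y * g y ^ p ∂ν ∂μ := by
        refine lintegral_mono_ae ?_
        filter_upwards [hK.aestronglyMeasurable.prodMk_left, hrow] with x hKx hx
        refine (rpow_lintegral_mul_le (k := K x) hKx.aemeasurable hg hp).trans ?_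
        gcongr
    _ = A ^ (p - 1) * ∫⁻ x, ∫⁻ y, K x y * g y ^ p ∂ν ∂μ :=
      lintegral_const_mul'' _ (hK.mul (hg.pow_const p).comp_snd).lintegral_prod_right'
    _ ≤ A ^ (p - 1) * B * ∫⁻ y, g y ^ p ∂ν := by
      rw [mul_assoc]
      gcongr
      exact lintegral_lintegral_mul_le_of_lintegral_col_le hK (hg.pow_const p) hcol

lemma essSup_lintegral_mul_le (hK : ∀ᵐ x ∂μ, AEMeasurable (K x) ν)
    (hrow : ∀ᵐ x ∂μ, ∫⁻ y, K x y ∂ν ≤ A) :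
    essSup (fun x => ∫⁻ y, K x y * g y ∂ν) μ ≤ A * essSup g ν := by
  refine essSup_le_of_ae_le _ ?_
  filter_upwards [hK, hrow] with x hKx hx
  calc ∫⁻ y, K x y * g y ∂ν
      ≤ ∫⁻ y, K x y * essSup g ν ∂ν := by
        refine lintegral_mono_ae ?_
        filter_upwards [ENNReal.ae_le_essSup g] with y hy
        gcongr
    _ = (∫⁻ y, K x y ∂ν) * essSup g ν := lintegral_mul_const'' _ hKx
    _ ≤ A * essSup g ν := by gcongr

theorem eLpNorm_lintegral_mul_le_of_schur [SFinite μ] [SFinite ν]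
    (hK : AEMeasurable (Function.uncurry K) (μ.prod ν)) (hg : AEMeasurable g ν)
    (hrow : ∀ᵐ x ∂μ, ∫⁻ y, K x y ∂ν ≤ A) (hcol : ∀ᵐ y ∂ν, ∫⁻ x, K x y ∂μ ≤ B)
    {p : ℝ≥0∞} (hp : 1 ≤ p) :
    eLpNorm (fun x => ∫⁻ y, K x y * g y ∂ν) p μ ≤
      A ^ (1 - p⁻¹.toReal) * B ^ p⁻¹.toReal * eLpNorm g p ν := by
  have hp₀ : p ≠ 0 := (zero_lt_one.trans_le hp).ne'
  rcases eq_or_ne p ∞ with rfl | hp_top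
  · have hrows : ∀ᵐ x ∂μ, AEMeasurable (K x) ν :=
      hK.aestronglyMeasurable.prodMk_left.mono fun _ hx => hx.aemeasurable
    simpa [eLpNormEssSup_eq_essSup_enorm] using essSup_lintegral_mul_le (g := g) hrows hrow
  · have hp₁ : 1 ≤ p.toReal := ENNReal.toReal_mono hp_top hp
    have hp_pos : 0 < p.toReal := by linarith
    simp only [eLpNorm_eq_lintegral_rpow_enorm_toReal hp₀ hp_top, enorm_eq_self, one_div,
      ENNReal.toReal_inv]
    calc (∫⁻ x, (∫⁻ y, K x y * g y ∂ν) ^ p.toReal ∂μ) ^ p.toReal⁻¹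
        ≤ (A ^ (p.toReal - 1) * B * ∫⁻ y, g y ^ p.toReal ∂ν) ^ p.toReal⁻¹ := by
          gcongr
          exact lintegral_rpow_lintegral_mul_le hK hg hrow hcol hp₁
      _ = A ^ (1 - p.toReal⁻¹) * B ^ p.toReal⁻¹ *
          (∫⁻ y, g y ^ p.toReal ∂ν) ^ p.toReal⁻¹ := by
        simp only [ENNReal.mul_rpow_of_nonneg _ _ (inv_nonneg.2 hp_pos.le), ← ENNReal.rpow_mul,
          sub_mul, one_mul, mul_inv_cancel₀ hp_pos.ne']

end SchurTest

section HaarMeasure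

/-- The Haar measure `dt/t` of the multiplicative group `(0,∞)`, as a measure on `ℝ`. -/
noncomputable def haarIoi : Measure ℝ :=
  (volume.restrict (Set.Ioi (0 : ℝ))).withDensity fun t => ENNReal.ofReal t⁻¹

instance : SigmaFinite haarIoi := SigmaFinite.withDensity_ofReal _

lemma ae_haarIoi_pos : ∀ᵐ t ∂haarIoi, 0 < t :=
  (withDensity_absolutelyContinuous _ _).ae_le (ae_restrict_mem measurableSet_Ioi)

lemma haarIoc_eq_restrict_haarIoi : haarIoc = haarIoi.restrict (Set.Ioc 0 1) := by
  rw [haarIoc, haarIoi, restrict_withDensity measurableSet_Ioc,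
    Measure.restrict_restrict_of_subset Set.Ioc_subset_Ioi_self]

lemma haarIoc_le_haarIoi : haarIoc ≤ haarIoi :=
  haarIoc_eq_restrict_haarIoi.trans_le Measure.restrict_le_self

lemma setLIntegral_haarIoi {s : Set ℝ} (hs : MeasurableSet s) (F : ℝ → ℝ≥0∞) :
    ∫⁻ t in s, F t ∂haarIoi = ∫⁻ t in s ∩ Set.Ioi 0, F t * ENNReal.ofReal t⁻¹ := by
  rw [haarIoi, setLIntegral_withDensity_eq_setLIntegral_mul_non_measurable _ (by fun_prop) F hs
    (.of_forall fun _ => ENNReal.ofReal_lt_top), Measure.restrict_restrict hs]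
  simp only [Pi.mul_apply, mul_comm]

lemma lintegral_haarIoc (F : ℝ → ℝ≥0∞) :
    ∫⁻ t, F t ∂haarIoc = ∫⁻ t in Set.Ioc (0 : ℝ) 1, F t * ENNReal.ofReal t⁻¹ := by
  rw [haarIoc_eq_restrict_haarIoi, setLIntegral_haarIoi measurableSet_Ioc,
    Set.inter_eq_left.2 Set.Ioc_subset_Ioi_self]

lemma lqNorm_eq_eLpNorm {q : ℝ≥0∞} (hq : q ≠ 0) (g : ℝ → ℝ≥0∞) :
    lqNorm q g = eLpNorm g q haarIoc := by
  rw [lqNorm]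
  split_ifs with hq_top
  · simp [hq_top, eLpNormEssSup_eq_essSup_enorm]
  · simp [eLpNorm_eq_lintegral_rpow_enorm_toReal hq hq_top]

lemma setLIntegral_Iic_div_rpow_haarIoi {u s : ℝ} (hu : 0 < u) (hs : 0 < s) :
    ∫⁻ t in Set.Iic u, ENNReal.ofReal ((t / u) ^ s) ∂haarIoi = ENNReal.ofReal (1 / s) := by
  have hintegrable : IntegrableOn (fun t : ℝ => u ^ (-s) * t ^ (s - 1)) (Set.Ioc 0 u) :=
    ((intervalIntegrable_iff_integrableOn_Ioc_of_le hu.le).1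
      (intervalIntegral.intervalIntegrable_rpow' (by linarith))).const_mul _
  have hnonneg : 0 ≤ᵐ[volume.restrict (Set.Ioc 0 u)] fun t : ℝ => u ^ (-s) * t ^ (s - 1) := by
    filter_upwards [ae_restrict_mem measurableSet_Ioc] with t ht
    exact mul_nonneg (Real.rpow_nonneg hu.le _) (Real.rpow_nonneg ht.1.le _)
  calc ∫⁻ t in Set.Iic u, ENNReal.ofReal ((t / u) ^ s) ∂haarIoi
      = ∫⁻ t in Set.Ioc 0 u, ENNReal.ofReal (u ^ (-s) * t ^ (s - 1)) := by
        rw [setLIntegral_haarIoi measurableSet_Iic, Set.inter_comm, Set.Ioi_inter_Iic]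
        refine setLIntegral_congr_fun measurableSet_Ioc fun t ht => ?_
        have ht₀ : 0 < t := ht.1
        simp only [← ENNReal.ofReal_mul (Real.rpow_nonneg (div_pos ht₀ hu).le s)]
        rw [Real.div_rpow ht₀.le hu.le, Real.rpow_neg hu.le, Real.rpow_sub_one ht₀.ne']
        ring_nf
    _ = ENNReal.ofReal (u ^ (-s) * (u ^ s / s)) := by
      rw [← ofReal_integral_eq_lintegral_ofReal hintegrable hnonneg, integral_const_mul,
        ← intervalIntegral.integral_of_le hu.le, integral_rpow (Or.inl (by linarith)),
        sub_add_cancel, Real.zero_rpow hs.ne', sub_zero]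
    _ = ENNReal.ofReal (1 / s) := by
      rw [← mul_div_assoc, ← Real.rpow_add hu, neg_add_cancel, Real.rpow_zero]

lemma setLIntegral_Ioi_div_rpow_haarIoi {u s : ℝ} (hu : 0 < u) (hs : 0 < s) :
    ∫⁻ t in Set.Ioi u, ENNReal.ofReal ((u / t) ^ s) ∂haarIoi = ENNReal.ofReal (1 / s) := by
  have hintegrable : IntegrableOn (fun t : ℝ => u ^ s * t ^ (-s - 1)) (Set.Ioi u) :=
    (integrableOn_Ioi_rpow_of_lt (by linarith) hu).const_mul _
  have hnonneg : 0 ≤ᵐ[volume.restrict (Set.Ioi u)] fun t : ℝ => u ^ s * t ^ (-s - 1) := by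
    filter_upwards [ae_restrict_mem measurableSet_Ioi] with t ht
    exact mul_nonneg (Real.rpow_nonneg hu.le _) (Real.rpow_nonneg (hu.trans ht).le _)
  calc ∫⁻ t in Set.Ioi u, ENNReal.ofReal ((u / t) ^ s) ∂haarIoi
      = ∫⁻ t in Set.Ioi u, ENNReal.ofReal (u ^ s * t ^ (-s - 1)) := by
        rw [setLIntegral_haarIoi measurableSet_Ioi, Set.Ioi_inter_Ioi, sup_eq_left.2 hu.le]
        refine setLIntegral_congr_fun measurableSet_Ioi fun t ht => ?_
        have ht₀ : 0 < t := hu.trans ht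
        simp only [← ENNReal.ofReal_mul (Real.rpow_nonneg (div_pos hu ht₀).le s)]
        rw [Real.div_rpow hu.le ht₀.le, Real.rpow_sub_one ht₀.ne', Real.rpow_neg ht₀.le]
        ring_nf
    _ = ENNReal.ofReal (u ^ s * (u ^ (-s) / s)) := by
      rw [← ofReal_integral_eq_lintegral_ofReal hintegrable hnonneg, integral_const_mul,
        integral_Ioi_rpow_of_lt (by linarith) hu, sub_add_cancel, neg_div_neg_eq]
    _ = ENNReal.ofReal (1 / s) := by
      rw [← mul_div_assoc, ← Real.rpow_add hu, add_neg_cancel, Real.rpow_zero]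

end HaarMeasure

section ConjKernel

/-- The kernel `K(u,t) = (t/u)^α (tu/(t+u)²)^r` with respect to `dt/t` of the operator with kernel
`(tu/(t+u)²)^r`, after conjugation by the weight `u^{-α}`. Meaningful for `u, t > 0`. -/
noncomputable def conjKernel (r α u t : ℝ) : ℝ≥0∞ :=
  ENNReal.ofReal ((t / u) ^ α * (t * u / (t + u) ^ 2) ^ r)

variable {r α u t : ℝ}

lemma measurable_uncurry_conjKernel (r α : ℝ) :
    Measurable (Function.uncurry (conjKernel r α)) := by
  unfold conjKernel Function.uncurry
  fun_prop

lemma conjKernel_swap (hu : 0 < u) (ht : 0 < t) :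
    conjKernel r α u t = conjKernel r (-α) t u := by
  rw [conjKernel, conjKernel, Real.rpow_neg (div_pos hu ht).le, ← Real.inv_rpow (div_pos hu ht).le,
    inv_div, mul_comm t u, add_comm t u]

lemma ofReal_rpow_neg_mul_eq_conjKernel_mul (hu : 0 < u) (ht : 0 < t) (c : ℝ≥0∞) :
    ENNReal.ofReal (u ^ (-α)) * (ENNReal.ofReal ((t * u / (t + u) ^ 2) ^ r) * c) =
      conjKernel r α u t * (ENNReal.ofReal (t ^ (-α)) * c) := by
  rw [conjKernel, ← mul_assoc, ← mul_assoc, ← ENNReal.ofReal_mul (by positivity),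
    ← ENNReal.ofReal_mul (by positivity), Real.div_rpow ht.le hu.le, Real.rpow_neg hu.le,
    Real.rpow_neg ht.le]
  have htα : t ^ α ≠ 0 := (Real.rpow_pos_of_pos ht α).ne'
  field_simp

lemma conjKernel_le_div_rpow (hr : 0 ≤ r) (hu : 0 < u) (ht : 0 < t) :
    conjKernel r α u t ≤ ENNReal.ofReal ((t / u) ^ (r + α)) := by
  have hratio : t * u / (t + u) ^ 2 ≤ t / u := by
    rw [div_le_div_iff₀ (by positivity) hu, mul_assoc]
    gcongr
    nlinarith [mul_pos ht hu]
  rw [conjKernel, add_comm r α, Real.rpow_add (div_pos ht hu)]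
  gcongr

lemma lintegral_conjKernel_le (hα₁ : -r < α) (hα₂ : α < r) (hu : 0 < u) :
    ∫⁻ t, conjKernel r α u t ∂haarIoi ≤ ENNReal.ofReal (2 * r / (r ^ 2 - α ^ 2)) := by
  have hr : 0 ≤ r := by linarith
  have hadd : 0 < r + α := by linarith
  have hsub : 0 < r - α := by linarith
  have hpos (s : Set ℝ) : ∀ᵐ t ∂haarIoi.restrict s, 0 < t := ae_restrict_of_ae ae_haarIoi_pos
  have hleft : ∫⁻ t in Set.Iic u, conjKernel r α u t ∂haarIoi ≤ ENNReal.ofReal (1 / (r + α)) := by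
    rw [← setLIntegral_Iic_div_rpow_haarIoi hu hadd]
    exact lintegral_mono_ae ((hpos _).mono fun t ht => conjKernel_le_div_rpow hr hu ht)
  have hright : ∫⁻ t in Set.Ioi u, conjKernel r α u t ∂haarIoi ≤ ENNReal.ofReal (1 / (r - α)) := by
    rw [← setLIntegral_Ioi_div_rpow_haarIoi hu hsub]
    refine lintegral_mono_ae ((hpos _).mono fun t ht => ?_)
    rw [conjKernel_swap hu ht]
    exact conjKernel_le_div_rpow hr ht hu
  calc ∫⁻ t, conjKernel r α u t ∂haarIoi
      = ∫⁻ t in Set.Iic u, conjKernel r α u t ∂haarIoi +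
          ∫⁻ t in Set.Ioi u, conjKernel r α u t ∂haarIoi := by
        rw [← lintegral_add_compl _ measurableSet_Iic, Set.compl_Iic]
    _ ≤ ENNReal.ofReal (1 / (r + α)) + ENNReal.ofReal (1 / (r - α)) := add_le_add hleft hright
    _ = ENNReal.ofReal (2 * r / (r ^ 2 - α ^ 2)) := by
      rw [← ENNReal.ofReal_add (by positivity) (by positivity), sq_sub_sq]
      congr 1
      field_simp
      ring

lemma lintegral_conjKernel_left_le (hα₁ : -r < α) (hα₂ : α < r) (ht : 0 < t) :
    ∫⁻ u, conjKernel r α u t ∂haarIoi ≤ ENNReal.ofReal (2 * r / (r ^ 2 - α ^ 2)) := by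
  rw [lintegral_congr_ae (ae_haarIoi_pos.mono fun u hu => conjKernel_swap hu ht), ← neg_sq α]
  exact lintegral_conjKernel_le (by linarith) (by linarith) ht

end ConjKernel

theorem stmt1_general {r α : ℝ} (hα₁ : -r < α) (hα₂ : α < r) {q : ℝ≥0∞} (hq : 1 ≤ q)
    {μ : Measure ℝ} (hμ : μ ≤ haarIoi) {f : ℝ → ℝ≥0∞} (hf : AEMeasurable f μ) :
    eLpNorm (fun u => ENNReal.ofReal (u ^ (-α)) *
        ∫⁻ t, ENNReal.ofReal ((t * u / (t + u) ^ 2) ^ r) * f t ∂μ) q μ ≤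
      ENNReal.ofReal (2 * r / (r ^ 2 - α ^ 2)) *
        eLpNorm (fun u => ENNReal.ofReal (u ^ (-α)) * f u) q μ := by
  have : SigmaFinite μ := Measure.sigmaFinite_of_le haarIoi hμ
  have hpos : ∀ᵐ t ∂μ, 0 < t := ae_mono hμ ae_haarIoi_pos
  have hg : AEMeasurable (fun t => ENNReal.ofReal (t ^ (-α)) * f t) μ := by fun_prop
  have hconj : (fun u => ENNReal.ofReal (u ^ (-α)) *
      ∫⁻ t, ENNReal.ofReal ((t * u / (t + u) ^ 2) ^ r) * f t ∂μ) =ᵐ[μ]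
      fun u => ∫⁻ t, conjKernel r α u t * (ENNReal.ofReal (t ^ (-α)) * f t) ∂μ := by
    filter_upwards [hpos] with u hu
    rw [← lintegral_const_mul' _ _ ENNReal.ofReal_ne_top]
    exact lintegral_congr_ae (hpos.mono fun t ht => ofReal_rpow_neg_mul_eq_conjKernel_mul hu ht _)
  have hschur := eLpNorm_lintegral_mul_le_of_schur
    (measurable_uncurry_conjKernel r α).aemeasurable hg
    (hpos.mono fun _ hu => (lintegral_mono' hμ le_rfl).trans (lintegral_conjKernel_le hα₁ hα₂ hu))
    (hpos.mono fun _ ht =>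
      (lintegral_mono' hμ le_rfl).trans (lintegral_conjKernel_left_le hα₁ hα₂ ht)) hq
  have hq_inv : q⁻¹.toReal ≤ 1 :=
    ENNReal.toReal_le_of_le_ofReal zero_le_one (by simpa using hq)
  rwa [← ENNReal.rpow_add_of_nonneg _ _ (sub_nonneg.2 hq_inv) ENNReal.toReal_nonneg,
    sub_add_cancel, ENNReal.rpow_one, ← eLpNorm_congr_ae hconj] at hschur

/-- Let `r > 0`, `α ∈ (−r, r)`, `q ∈ [1,∞]` and `f : (0,1] → ℝ` measurable. Then
`‖ u ↦ u^{−α} ∫₀¹ (tu/(t+u)²)^r |f(t)| dt/t ‖_{L^q((0,1], du/u)}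
  ≤ (2r/(r² − α²)) · ‖ u ↦ u^{−α} f(u) ‖_{L^q((0,1], du/u)}`. -/
theorem stmt1 (r α : ℝ) (hr : 0 < r) (hα₁ : -r < α) (hα₂ : α < r)
    (q : ℝ≥0∞) (hq : 1 ≤ q) (f : ℝ → ℝ) (hf : Measurable f) :
    lqNorm q (fun u => ENNReal.ofReal (u ^ (-α)) *
        ∫⁻ t in Set.Ioc (0 : ℝ) 1,
          ENNReal.ofReal ((t * u / (t + u) ^ 2) ^ r * |f t|) * ENNReal.ofReal t⁻¹) ≤
      ENNReal.ofReal (2 * r / (r ^ 2 - α ^ 2)) *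
        lqNorm q (fun u => ENNReal.ofReal (u ^ (-α) * |f u|)) := by
  simpa only [lqNorm_eq_eLpNorm (zero_lt_one.trans_le hq).ne', ← lintegral_haarIoc,
    ENNReal.ofReal_mul' (abs_nonneg _)] using
    stmt1_general hα₁ hα₂ hq haarIoc_le_haarIoi (f := fun t => ENNReal.ofReal |f t|) (by fun_prop)
end

section
/- Let α > 0, let q ∈ [1,∞], and let f : (0,1] → ℝ be measurable. Then ‖ u ↦ u^{−α/2} ∫₀^u |f(t)| dt/t ‖_{L^q((0,1], du/u)} ≤ (2/α) · ‖ u ↦ u^{−α/2} f(u) ‖_{L^q((0,1], du/u)}. -/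
/-!
With `b = α / 2` and `g t = t ^ (-b) * |f t|`, the function on the left is `u ↦ ∫ K(u, t) g(t) dt/t`
for the kernel `K(u, t) = u ^ (-b) * t ^ b` on `t ≤ u`. The row integrals `∫ K(u, t) dt/t` and the
column integrals `∫ K(u, t) du/u` over `(0, 1]` are all at most `1 / b`, so Schur's test bounds the
integral operator on every `L^q` by `1 / b = 2 / α`. For `q < ∞`, Schur's test is Jensen's
inequality for the measures `K(u, t) dt/t` followed by Tonelli's theorem.
-/

open MeasureTheory
open scoped ENNReal NNReal

section SchurTest

variable {X Y : Type*} [MeasurableSpace X] [MeasurableSpace Y] {μ : Measure X} {ν : Measure Y}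

lemma lintegral_rpow_le_measure_univ_rpow_mul {g : Y → ℝ≥0∞} (hg : AEMeasurable g ν) {p : ℝ}
    (hp : 1 ≤ p) :
    (∫⁻ y, g y ∂ν) ^ p ≤ ν Set.univ ^ (p - 1) * ∫⁻ y, g y ^ p ∂ν := by
  have hp0 : 0 < p := by linarith
  have hnorm : ∫⁻ y, g y ∂ν ≤ (∫⁻ y, g y ^ p ∂ν) ^ (1 / p) * ν Set.univ ^ (1 - 1 / p) := by
    simpa only [eLpNorm', enorm_eq_self, ENNReal.rpow_one, div_one] using
      eLpNorm'_le_eLpNorm'_mul_rpow_measure_univ one_pos hp hg.aestronglyMeasurable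
  have hexp : (1 - 1 / p) * p = p - 1 := by field_simp
  calc (∫⁻ y, g y ∂ν) ^ p
      ≤ ((∫⁻ y, g y ^ p ∂ν) ^ (1 / p) * ν Set.univ ^ (1 - 1 / p)) ^ p := by gcongr
    _ = ν Set.univ ^ (p - 1) * ∫⁻ y, g y ^ p ∂ν := by
        rw [ENNReal.mul_rpow_of_nonneg _ _ hp0.le, ← ENNReal.rpow_mul, ← ENNReal.rpow_mul,
          one_div_mul_cancel hp0.ne', ENNReal.rpow_one, hexp, mul_comm]

lemma lintegral_mul_rpow_le_lintegral_rpow_mul {w g : Y → ℝ≥0∞} (hw : AEMeasurable w ν)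
    (hg : AEMeasurable g ν) {p : ℝ} (hp : 1 ≤ p) :
    (∫⁻ y, w y * g y ∂ν) ^ p ≤ (∫⁻ y, w y ∂ν) ^ (p - 1) * ∫⁻ y, w y * g y ^ p ∂ν := by
  have hjensen := lintegral_rpow_le_measure_univ_rpow_mul
    (hg.mono_ac (withDensity_absolutelyContinuous ν w)) hp
  rwa [lintegral_withDensity_eq_lintegral_mul₀ hw hg,
    lintegral_withDensity_eq_lintegral_mul₀ hw (hg.pow_const p),
    withDensity_apply _ MeasurableSet.univ, Measure.restrict_univ] at hjensen

variable {K : X → Y → ℝ≥0∞} {A B : ℝ≥0∞} {g : Y → ℝ≥0∞}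

lemma lintegral_rpow_lintegral_kernel_mul_le [SFinite μ] [SFinite ν]
    (hK : Measurable (Function.uncurry K)) (hrow : ∀ᵐ x ∂μ, ∫⁻ y, K x y ∂ν ≤ A)
    (hcol : ∀ᵐ y ∂ν, ∫⁻ x, K x y ∂μ ≤ B) (hg : AEMeasurable g ν) {p : ℝ} (hp : 1 ≤ p) :
    ∫⁻ x, (∫⁻ y, K x y * g y ∂ν) ^ p ∂μ ≤ A ^ (p - 1) * B * ∫⁻ y, g y ^ p ∂ν := by
  have hKx (x : X) : Measurable (K x) := hK.comp measurable_prodMk_left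
  have hKy (y : Y) : Measurable fun x => K x y := hK.comp measurable_prodMk_right
  have hgp : AEMeasurable (fun y => g y ^ p) ν := hg.pow_const p
  have hKg : AEMeasurable (Function.uncurry fun x y => K x y * g y ^ p) (μ.prod ν) :=
    hK.aemeasurable.mul hgp.comp_snd
  have hinner : AEMeasurable (fun x => ∫⁻ y, K x y * g y ^ p ∂ν) μ := hKg.lintegral_prod_right'
  calc ∫⁻ x, (∫⁻ y, K x y * g y ∂ν) ^ p ∂μ
      ≤ ∫⁻ x, A ^ (p - 1) * ∫⁻ y, K x y * g y ^ p ∂ν ∂μ := by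
        refine lintegral_mono_ae ?_
        filter_upwards [hrow] with x hx
        refine (lintegral_mul_rpow_le_lintegral_rpow_mul (hKx x).aemeasurable hg hp).trans ?_
        gcongr
    _ = A ^ (p - 1) * ∫⁻ y, ∫⁻ x, K x y * g y ^ p ∂μ ∂ν := by
        rw [lintegral_const_mul'' _ hinner, lintegral_lintegral_swap hKg]
    _ ≤ A ^ (p - 1) * ∫⁻ y, B * g y ^ p ∂ν := by
        refine mul_le_mul_right (lintegral_mono_ae ?_) _
        filter_upwards [hcol] with y hy
        rw [lintegral_mul_const _ (hKy y)]
        gcongr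
    _ = A ^ (p - 1) * B * ∫⁻ y, g y ^ p ∂ν := by
        rw [lintegral_const_mul'' _ hgp, mul_assoc]

lemma essSup_lintegral_kernel_mul_le (hK : ∀ x, AEMeasurable (K x) ν)
    (hrow : ∀ᵐ x ∂μ, ∫⁻ y, K x y ∂ν ≤ A) :
    essSup (fun x => ∫⁻ y, K x y * g y ∂ν) μ ≤ A * essSup g ν := by
  refine essSup_le_of_ae_le _ ?_
  filter_upwards [hrow] with x hx
  calc ∫⁻ y, K x y * g y ∂ν ≤ ∫⁻ y, K x y * essSup g ν ∂ν := by
        refine lintegral_mono_ae ?_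
        filter_upwards [ENNReal.ae_le_essSup g] with y hy
        gcongr
    _ = (∫⁻ y, K x y ∂ν) * essSup g ν := lintegral_mul_const'' _ (hK x)
    _ ≤ A * essSup g ν := by gcongr

-- For `p = ∞` the exponents are `1` and `0`, since `∞.toReal⁻¹ = 0⁻¹ = 0`.
theorem eLpNorm_lintegral_kernel_mul_le [SFinite μ] [SFinite ν]
    (hK : Measurable (Function.uncurry K)) (hrow : ∀ᵐ x ∂μ, ∫⁻ y, K x y ∂ν ≤ A)
    (hcol : ∀ᵐ y ∂ν, ∫⁻ x, K x y ∂μ ≤ B) (hg : AEMeasurable g ν) {p : ℝ≥0∞} (hp : 1 ≤ p) :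
    eLpNorm (fun x => ∫⁻ y, K x y * g y ∂ν) p μ ≤
      A ^ (1 - p.toReal⁻¹) * B ^ p.toReal⁻¹ * eLpNorm g p ν := by
  rcases eq_or_ne p ∞ with rfl | hp_top
  · simpa [eLpNormEssSup] using essSup_lintegral_kernel_mul_le
      (fun x => (hK.comp measurable_prodMk_left).aemeasurable) hrow
  · have hp1 : 1 ≤ p.toReal := by simpa using ENNReal.toReal_mono hp_top hp
    have hp0 : p ≠ 0 := (one_pos.trans_le hp).ne'
    have hexp : (p.toReal - 1) * p.toReal⁻¹ = 1 - p.toReal⁻¹ := by field_simp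
    simp only [eLpNorm_eq_lintegral_rpow_enorm_toReal hp0 hp_top, enorm_eq_self, one_div]
    calc (∫⁻ x, (∫⁻ y, K x y * g y ∂ν) ^ p.toReal ∂μ) ^ p.toReal⁻¹
        ≤ (A ^ (p.toReal - 1) * B * ∫⁻ y, g y ^ p.toReal ∂ν) ^ p.toReal⁻¹ := by
          gcongr
          exact lintegral_rpow_lintegral_kernel_mul_le hK hrow hcol hg hp1
      _ = A ^ (1 - p.toReal⁻¹) * B ^ p.toReal⁻¹ * (∫⁻ y, g y ^ p.toReal ∂ν) ^ p.toReal⁻¹ := by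
          rw [ENNReal.mul_rpow_of_nonneg _ _ (by positivity),
            ENNReal.mul_rpow_of_nonneg _ _ (by positivity), ← ENNReal.rpow_mul, hexp]

end SchurTest

section PowerIntegrals

lemma setLIntegral_Ioc_zero_rpow {a u : ℝ} (ha : -1 < a) (hu : 0 ≤ u) :
    ∫⁻ t in Set.Ioc 0 u, ENNReal.ofReal (t ^ a) = ENNReal.ofReal (u ^ (a + 1) / (a + 1)) := by
  have hint : IntegrableOn (fun t : ℝ => t ^ a) (Set.Ioc 0 u) :=
    (intervalIntegrable_iff_integrableOn_Ioc_of_le hu).1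
      (intervalIntegral.intervalIntegrable_rpow' ha)
  have hnonneg : 0 ≤ᵐ[volume.restrict (Set.Ioc 0 u)] fun t : ℝ => t ^ a :=
    ae_restrict_of_forall_mem measurableSet_Ioc fun t ht => Real.rpow_nonneg ht.1.le a
  rw [← ofReal_integral_eq_lintegral_ofReal hint hnonneg, ← intervalIntegral.integral_of_le hu,
    integral_rpow (Or.inl ha), Real.zero_rpow (by linarith), sub_zero]

lemma setLIntegral_Ioi_rpow {a c : ℝ} (ha : a < -1) (hc : 0 < c) :
    ∫⁻ t in Set.Ioi c, ENNReal.ofReal (t ^ a) = ENNReal.ofReal (-c ^ (a + 1) / (a + 1)) := by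
  have hnonneg : 0 ≤ᵐ[volume.restrict (Set.Ioi c)] fun t : ℝ => t ^ a :=
    ae_restrict_of_forall_mem measurableSet_Ioi fun t ht => Real.rpow_nonneg (hc.trans ht).le a
  rw [← ofReal_integral_eq_lintegral_ofReal (integrableOn_Ioi_rpow_of_lt ha hc) hnonneg,
    integral_Ioi_rpow_of_lt ha hc]

lemma ofReal_inv_mul_ofReal_rpow {t : ℝ} (ht : 0 < t) (a : ℝ) :
    ENNReal.ofReal t⁻¹ * ENNReal.ofReal (t ^ a) = ENNReal.ofReal (t ^ (a - 1)) := by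
  rw [← ENNReal.ofReal_mul (by positivity), Real.rpow_sub_one ht.ne', inv_mul_eq_div]

lemma ofReal_rpow_mul_ofReal_rpow_neg {t : ℝ} (ht : 0 < t) (a : ℝ) :
    ENNReal.ofReal (t ^ a) * ENNReal.ofReal (t ^ (-a)) = 1 := by
  rw [← ENNReal.ofReal_mul (by positivity), ← Real.rpow_add ht, add_neg_cancel, Real.rpow_zero,
    ENNReal.ofReal_one]

end PowerIntegrals

section HaarIoc

instance : SFinite haarIoc := by
  unfold haarIoc
  infer_instance

lemma ae_haarIoc_mem_Ioc : ∀ᵐ u ∂haarIoc, u ∈ Set.Ioc (0 : ℝ) 1 :=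
  (withDensity_absolutelyContinuous _ _).ae_le (ae_restrict_mem measurableSet_Ioc)

lemma setLIntegral_haarIoc {s : Set ℝ} (hs : MeasurableSet s) (h : ℝ → ℝ≥0∞) :
    ∫⁻ t in s, h t ∂haarIoc = ∫⁻ t in s ∩ Set.Ioc 0 1, ENNReal.ofReal t⁻¹ * h t := by
  rw [haarIoc, setLIntegral_withDensity_eq_setLIntegral_mul_non_measurable _ (by fun_prop) _ hs
    (by simp), Measure.restrict_restrict hs]
  rfl

lemma setLIntegral_Iic_haarIoc {u : ℝ} (hu : u ≤ 1) (h : ℝ → ℝ≥0∞) :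
    ∫⁻ t in Set.Iic u, h t ∂haarIoc = ∫⁻ t in Set.Ioc 0 u, ENNReal.ofReal t⁻¹ * h t := by
  rw [setLIntegral_haarIoc measurableSet_Iic, Set.inter_comm, Set.Ioc_inter_Iic,
    min_eq_right hu]

lemma setLIntegral_Iic_rpow_haarIoc {b u : ℝ} (hb : 0 < b) (hu : u ∈ Set.Ioc (0 : ℝ) 1) :
    ∫⁻ t in Set.Iic u, ENNReal.ofReal (t ^ b) ∂haarIoc = ENNReal.ofReal (u ^ b / b) := by
  rw [setLIntegral_Iic_haarIoc hu.2, setLIntegral_congr_fun measurableSet_Ioc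
    fun t ht => ofReal_inv_mul_ofReal_rpow ht.1 b,
    setLIntegral_Ioc_zero_rpow (by linarith) hu.1.le, sub_add_cancel]

lemma setLIntegral_Ici_rpow_neg_haarIoc_le {b t : ℝ} (hb : 0 < b) (ht : 0 < t) :
    ∫⁻ u in Set.Ici t, ENNReal.ofReal (u ^ (-b)) ∂haarIoc ≤ ENNReal.ofReal (t ^ (-b) / b) := by
  calc ∫⁻ u in Set.Ici t, ENNReal.ofReal (u ^ (-b)) ∂haarIoc
      = ∫⁻ u in Set.Ici t ∩ Set.Ioc 0 1, ENNReal.ofReal (u ^ (-b - 1)) := by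
        rw [setLIntegral_haarIoc measurableSet_Ici]
        exact setLIntegral_congr_fun (measurableSet_Ici.inter measurableSet_Ioc)
          fun u hu => ofReal_inv_mul_ofReal_rpow hu.2.1 (-b)
    _ ≤ ∫⁻ u in Set.Ici t, ENNReal.ofReal (u ^ (-b - 1)) :=
        lintegral_mono_set Set.inter_subset_left
    _ = ENNReal.ofReal (t ^ (-b) / b) := by
        rw [← setLIntegral_congr Ioi_ae_eq_Ici, setLIntegral_Ioi_rpow (by linarith) ht,
          sub_add_cancel, neg_div_neg_eq]

end HaarIoc

section HardyKernel

/-- The kernel of the weighted Hardy operator `g ↦ u ^ (-b) * ∫₀ᵘ t ^ b * g t dt/t`. Positivity of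
`t` is not imposed, since `haarIoc` only charges `(0, 1]`. -/
noncomputable def hardyKernel (b u t : ℝ) : ℝ≥0∞ :=
  if t ≤ u then ENNReal.ofReal (u ^ (-b)) * ENNReal.ofReal (t ^ b) else 0

lemma measurable_uncurry_hardyKernel (b : ℝ) : Measurable (Function.uncurry (hardyKernel b)) :=
  Measurable.ite (measurableSet_le measurable_snd measurable_fst) (by fun_prop) measurable_const

lemma lintegral_hardyKernel_mul (b u : ℝ) (h : ℝ → ℝ≥0∞) :
    ∫⁻ t, hardyKernel b u t * h t ∂haarIoc =
      ENNReal.ofReal (u ^ (-b)) * ∫⁻ t in Set.Iic u, ENNReal.ofReal (t ^ b) * h t ∂haarIoc := by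
  rw [← lintegral_const_mul' _ _ ENNReal.ofReal_ne_top, ← lintegral_indicator measurableSet_Iic]
  simp only [hardyKernel, Set.indicator_apply, Set.mem_Iic, ite_mul, zero_mul, mul_assoc]

lemma lintegral_hardyKernel_right {b u : ℝ} (hb : 0 < b) (hu : u ∈ Set.Ioc (0 : ℝ) 1) :
    ∫⁻ t, hardyKernel b u t ∂haarIoc = ENNReal.ofReal b⁻¹ := by
  have hrow := lintegral_hardyKernel_mul b u 1
  simp only [Pi.one_apply, mul_one] at hrow
  rw [hrow, setLIntegral_Iic_rpow_haarIoc hb hu, div_eq_mul_inv,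
    ENNReal.ofReal_mul (Real.rpow_nonneg hu.1.le b), ← mul_assoc,
    mul_comm (ENNReal.ofReal (u ^ (-b))), ofReal_rpow_mul_ofReal_rpow_neg hu.1, one_mul]

lemma lintegral_hardyKernel_left_le {b t : ℝ} (hb : 0 < b) (ht : 0 < t) :
    ∫⁻ u, hardyKernel b u t ∂haarIoc ≤ ENNReal.ofReal b⁻¹ := by
  calc ∫⁻ u, hardyKernel b u t ∂haarIoc
      = ENNReal.ofReal (t ^ b) * ∫⁻ u in Set.Ici t, ENNReal.ofReal (u ^ (-b)) ∂haarIoc := by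
        rw [← lintegral_const_mul' _ _ ENNReal.ofReal_ne_top,
          ← lintegral_indicator measurableSet_Ici]
        simp only [hardyKernel, Set.indicator_apply, Set.mem_Ici, mul_comm]
    _ ≤ ENNReal.ofReal (t ^ b) * ENNReal.ofReal (t ^ (-b) / b) := by
        gcongr
        exact setLIntegral_Ici_rpow_neg_haarIoc_le hb ht
    _ = ENNReal.ofReal b⁻¹ := by
        rw [div_eq_mul_inv, ENNReal.ofReal_mul (Real.rpow_nonneg ht.le _), ← mul_assoc,
          ofReal_rpow_mul_ofReal_rpow_neg ht, one_mul]

lemma lintegral_hardyKernel_mul_rpow_neg (b : ℝ) (f : ℝ → ℝ≥0∞) {u : ℝ} (hu : u ≤ 1) :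
    ∫⁻ t, hardyKernel b u t * (ENNReal.ofReal (t ^ (-b)) * f t) ∂haarIoc =
      ENNReal.ofReal (u ^ (-b)) * ∫⁻ t in Set.Ioc 0 u, f t * ENNReal.ofReal t⁻¹ := by
  rw [lintegral_hardyKernel_mul, setLIntegral_Iic_haarIoc hu]
  congr 1
  refine setLIntegral_congr_fun measurableSet_Ioc fun t ht => ?_
  rw [← mul_assoc (ENNReal.ofReal (t ^ b)), ofReal_rpow_mul_ofReal_rpow_neg ht.1, one_mul, mul_comm]

end HardyKernel

theorem stmt3_general (α : ℝ) (hα : 0 < α) (q : ℝ≥0∞) (hq : 1 ≤ q)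
    (f : ℝ → ℝ≥0∞) (hf : AEMeasurable f haarIoc) :
    lqNorm q (fun u => ENNReal.ofReal (u ^ (-α / 2)) *
        ∫⁻ t in Set.Ioc (0 : ℝ) u, f t * ENNReal.ofReal t⁻¹) ≤
      ENNReal.ofReal (2 / α) * lqNorm q (fun u => ENNReal.ofReal (u ^ (-α / 2)) * f u) := by
  have hb : 0 < α / 2 := half_pos hα
  have hC : ENNReal.ofReal (α / 2)⁻¹ ≠ 0 := by simpa using hα
  have hrow : ∀ᵐ u ∂haarIoc, ∫⁻ t, hardyKernel (α / 2) u t ∂haarIoc ≤ ENNReal.ofReal (α / 2)⁻¹ :=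
    ae_haarIoc_mem_Ioc.mono fun u hu => (lintegral_hardyKernel_right hb hu).le
  have hcol : ∀ᵐ t ∂haarIoc, ∫⁻ u, hardyKernel (α / 2) u t ∂haarIoc ≤ ENNReal.ofReal (α / 2)⁻¹ :=
    ae_haarIoc_mem_Ioc.mono fun t ht => lintegral_hardyKernel_left_le hb ht.1
  have hg : AEMeasurable (fun t => ENNReal.ofReal (t ^ (-(α / 2))) * f t) haarIoc :=
    AEMeasurable.mul (by fun_prop) hf
  have hschur := eLpNorm_lintegral_kernel_mul_le (measurable_uncurry_hardyKernel (α / 2))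
    hrow hcol hg hq
  rw [← ENNReal.rpow_add _ _ hC ENNReal.ofReal_ne_top, sub_add_cancel, ENNReal.rpow_one,
    inv_div] at hschur
  have hq0 : q ≠ 0 := (one_pos.trans_le hq).ne'
  rw [lqNorm_eq_eLpNorm hq0, lqNorm_eq_eLpNorm hq0, neg_div]
  refine (eLpNorm_congr_ae ?_).trans_le hschur
  exact ae_haarIoc_mem_Ioc.mono fun u hu => (lintegral_hardyKernel_mul_rpow_neg _ f hu.2).symm

/-- Hardy-type inequality: for `α > 0`, `q ∈ [1,∞]` and measurable `f : (0,1] → ℝ`,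
`‖ u ↦ u^{−α/2} ∫₀^u |f(t)| dt/t ‖_{L^q((0,1], du/u)}
  ≤ (2/α) · ‖ u ↦ u^{−α/2} f(u) ‖_{L^q((0,1], du/u)}`. -/
theorem stmt3 (α : ℝ) (hα : 0 < α) (q : ℝ≥0∞) (hq : 1 ≤ q)
    (f : ℝ → ℝ) (hf : Measurable f) :
    lqNorm q (fun u => ENNReal.ofReal (u ^ (-α / 2)) *
        ∫⁻ t in Set.Ioc (0 : ℝ) u, ENNReal.ofReal |f t| * ENNReal.ofReal t⁻¹) ≤
      ENNReal.ofReal (2 / α) *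
        lqNorm q (fun u => ENNReal.ofReal (u ^ (-α / 2) * |f u|)) := by
  simpa only [ENNReal.ofReal_mul' (abs_nonneg _)] using
    stmt3_general α hα q hq (fun t => ENNReal.ofReal |f t|) (by fun_prop)
end

section
/- There exists ℓ₀ > 0, depending only on the doubling constant C_D, such that for every ℓ ≥ ℓ₀ and every c > 0 there exist a constant c' > 0 and a constant C ≥ 0 with the following property: for all s, t ∈ (0,1] and all x, z ∈ M, ∫_M G_t^{c,ℓ}(x,y) · G_s^{c,ℓ}(y,z) μ(dy) ≤ C · G_{t+s}^{c',ℓ}(x,z). -/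
/-!
Write `V(x,t) = μ(B(x,√t))`, `τ = t + s`, and let `D` be the doubling dimension, `C_D = 2 ^ D`.
Rescaling `d²` costs only constants, so take `c = c' = 1`; then
`G_t(x,y) = V(x,t)⁻¹ (t / (t + d(x,y)²))^ℓ`. Since
`τ + d(x,z)² ≤ 2 (t + d(x,y)²) + 2 (s + d(y,z)²)`, one of the two kernels, say the one with time `u`
and distance `r`, satisfies `τ + d(x,z)² ≤ 4 (u + r²)`. Its decay
`(u / (u + r²))^ℓ ≤ 4^ℓ (u / τ)^ℓ (τ / (τ + d(x,z)²))^ℓ` contains all the decay of `G_τ(x,z)`, and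
the factor `(u / τ)^ℓ` pays for replacing its volume by `V(x,τ)`, which by doubling costs
`(τ / u)^(D/2)`. Changing the centre of a ball costs `(1 + d²/t)^(D/2)`, which is absorbed by the
other kernel. What remains of that kernel has exponent `ℓ - D/2 > D/2`, and its integral is bounded
by summing over dyadic balls.
-/

open MeasureTheory Metric
open scoped ENNReal NNReal

/-- The Gaussian-type kernel `G_t^{c,ℓ}(x,y) := μ(B(x,√t))⁻¹ · (1 + c·d(x,y)²/t)^{−ℓ}`. -/
noncomputable def Gker {M : Type*} [MetricSpace M] [MeasurableSpace M]
    (μ : Measure M) (c ℓ t : ℝ) (x y : M) : ℝ :=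
  ((μ (ball x (Real.sqrt t))).toReal)⁻¹ * (1 + c * dist x y ^ 2 / t) ^ (-ℓ)

section RealPowers

variable {a b t τ K α ℓ : ℝ}

lemma rpow_neg_le_mul_rpow_neg (ha : 0 < a) (hb : 0 < b) (hℓ : 0 ≤ ℓ) (h : b ≤ K * a) :
    a ^ (-ℓ) ≤ K ^ ℓ * b ^ (-ℓ) := by
  have hK : 0 < K := pos_of_mul_pos_left (hb.trans_le h) ha.le
  have hpow : b ^ ℓ ≤ K ^ ℓ * a ^ ℓ := by
    rw [← Real.mul_rpow hK.le ha.le]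
    exact Real.rpow_le_rpow hb.le h hℓ
  rw [Real.rpow_neg ha.le, Real.rpow_neg hb.le, ← div_eq_mul_inv, le_div_iff₀ (by positivity),
    inv_mul_le_iff₀ (by positivity), mul_comm]
  exact hpow

lemma div_rpow_mul_one_add_div_rpow_neg_le (ht : 0 < t) (htτ : t ≤ τ) (ha : 0 ≤ a) (hb : 0 ≤ b)
    (hαℓ : α ≤ ℓ) (hℓ : 0 ≤ ℓ) (h : τ + b ≤ K * (t + a)) :
    (τ / t) ^ α * (1 + a / t) ^ (-ℓ) ≤ K ^ ℓ * (1 + b / τ) ^ (-ℓ) := by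
  have hτ : 0 < τ := ht.trans_le htτ
  have hratio : 1 ≤ τ / t := (one_le_div ht).2 htτ
  have hdom : τ / t * (1 + b / τ) ≤ K * (1 + a / t) := by
    calc τ / t * (1 + b / τ) = (τ + b) / t := by field_simp
      _ ≤ K * (t + a) / t := by gcongr
      _ = K * (1 + a / t) := by field_simp
  have hdecay := rpow_neg_le_mul_rpow_neg (by positivity) (by positivity) hℓ hdom
  calc (τ / t) ^ α * (1 + a / t) ^ (-ℓ)
      ≤ (τ / t) ^ ℓ * (K ^ ℓ * (τ / t * (1 + b / τ)) ^ (-ℓ)) := by gcongr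
    _ = (τ / t) ^ ℓ * (τ / t) ^ (-ℓ) * (K ^ ℓ * (1 + b / τ) ^ (-ℓ)) := by
        rw [Real.mul_rpow (by positivity) (by positivity)]; ring
    _ = K ^ ℓ * (1 + b / τ) ^ (-ℓ) := by
        rw [← Real.rpow_add (by positivity), add_neg_cancel, Real.rpow_zero, one_mul]

end RealPowers

/-- The measure `μ` has doubling dimension at most `D`: balls have positive finite measure and `μ`
is doubling with constant `2 ^ D`. The bound is stated for `μ.real`, which loses nothing because
balls have finite measure. -/
structure HasDoublingDim {M : Type*} [PseudoMetricSpace M] [MeasurableSpace M] (μ : Measure M)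
    (D : ℝ) : Prop where
  measure_ball_pos : ∀ (x : M) {r : ℝ}, 0 < r → 0 < μ (ball x r)
  measure_ball_lt_top : ∀ (x : M) {r : ℝ}, 0 < r → μ (ball x r) < ⊤
  measureReal_ball_two_mul_le : ∀ (x : M) {r : ℝ}, 0 < r →
    μ.real (ball x (2 * r)) ≤ 2 ^ D * μ.real (ball x r)

namespace HasDoublingDim

section Volume

variable {M : Type*} [PseudoMetricSpace M] [MeasurableSpace M] {μ : Measure M} {D r R t τ : ℝ}

lemma of_measure_ball_two_mul_le {C : ℝ≥0} (hC : 0 < C)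
    (hball : ∀ (x : M) (ρ : ℝ), 0 < ρ → 0 < μ (ball x ρ) ∧ μ (ball x ρ) < ⊤)
    (hdouble : ∀ (x : M) (ρ : ℝ), 0 < ρ → μ (ball x (2 * ρ)) ≤ C * μ (ball x ρ)) :
    HasDoublingDim μ (Real.logb 2 C) where
  measure_ball_pos x _ hr := (hball x _ hr).1
  measure_ball_lt_top x _ hr := (hball x _ hr).2
  measureReal_ball_two_mul_le x r hr := by
    rw [Real.rpow_logb two_pos (by norm_num) (by exact_mod_cast hC)]
    simpa [measureReal_def] using ENNReal.toReal_mono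
      (ENNReal.mul_ne_top ENNReal.coe_ne_top (hball x r hr).2.ne) (hdouble x r hr)

lemma measureReal_ball_pos (h : HasDoublingDim μ D) (x : M) (hr : 0 < r) :
    0 < μ.real (ball x r) :=
  ENNReal.toReal_pos (h.measure_ball_pos x hr).ne' (h.measure_ball_lt_top x hr).ne

lemma measureReal_ball_mono (h : HasDoublingDim μ D) {x y : M} (hR : 0 < R)
    (hsub : ball x r ⊆ ball y R) : μ.real (ball x r) ≤ μ.real (ball y R) :=
  measureReal_mono hsub (h.measure_ball_lt_top y hR).ne

lemma dim_nonneg (h : HasDoublingDim μ D) (x : M) : 0 ≤ D := by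
  have hpos := h.measureReal_ball_pos x one_pos
  have hle : μ.real (ball x 1) ≤ 2 ^ D * μ.real (ball x 1) :=
    (h.measureReal_ball_mono (by norm_num) (ball_subset_ball (by norm_num))).trans
      (h.measureReal_ball_two_mul_le x one_pos)
  by_contra! hD
  exact (mul_lt_of_lt_one_left hpos
    (Real.rpow_lt_one_of_one_lt_of_neg one_lt_two hD)).not_ge hle

lemma measureReal_ball_two_pow_mul_le (h : HasDoublingDim μ D) (x : M) (hr : 0 < r) (k : ℕ) :
    μ.real (ball x (2 ^ k * r)) ≤ (2 ^ D) ^ k * μ.real (ball x r) := by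
  induction k with
  | zero => simp
  | succ k ih =>
    calc μ.real (ball x (2 ^ (k + 1) * r))
        = μ.real (ball x (2 * (2 ^ k * r))) := by rw [pow_succ', mul_assoc]
      _ ≤ 2 ^ D * μ.real (ball x (2 ^ k * r)) :=
          h.measureReal_ball_two_mul_le x (by positivity)
      _ ≤ 2 ^ D * ((2 ^ D) ^ k * μ.real (ball x r)) := by gcongr
      _ = (2 ^ D) ^ (k + 1) * μ.real (ball x r) := by rw [pow_succ', mul_assoc]

lemma measureReal_ball_le_rpow_mul (h : HasDoublingDim μ D) (x : M) (hr : 0 < r) (hR : r ≤ R) :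
    μ.real (ball x R) ≤ (2 * (R / r)) ^ D * μ.real (ball x r) := by
  obtain ⟨k, hk, hk'⟩ := exists_nat_pow_near ((one_le_div hr).2 hR) (one_lt_two (α := ℝ))
  have hD := h.dim_nonneg x
  calc μ.real (ball x R) ≤ μ.real (ball x (2 ^ (k + 1) * r)) :=
        h.measureReal_ball_mono (by positivity) (ball_subset_ball ((div_lt_iff₀ hr).1 hk').le)
    _ ≤ (2 ^ D) ^ (k + 1) * μ.real (ball x r) := h.measureReal_ball_two_pow_mul_le x hr _
    _ = (2 * 2 ^ k) ^ D * μ.real (ball x r) := by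
        rw [← pow_succ', Real.rpow_pow_comm zero_le_two]
    _ ≤ (2 * (R / r)) ^ D * μ.real (ball x r) := by gcongr

lemma measureReal_ball_sqrt_le (h : HasDoublingDim μ D) (x y : M) (ht : 0 < t) (htτ : t ≤ τ) :
    μ.real (ball x √τ) ≤
      (8 * ((τ + dist x y ^ 2) / t)) ^ (D / 2) * μ.real (ball y √t) := by
  have hτ : 0 < τ := ht.trans_le htτ
  have hD := h.dim_nonneg x
  have hR : √t ≤ √τ + dist x y :=
    (Real.sqrt_le_sqrt htτ).trans (le_add_of_nonneg_right dist_nonneg)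
  have hsq : (2 * ((√τ + dist x y) / √t)) ^ 2 ≤ 8 * ((τ + dist x y ^ 2) / t) := by
    calc (2 * ((√τ + dist x y) / √t)) ^ 2 = 4 * ((√τ + dist x y) ^ 2 / t) := by
          rw [mul_pow, div_pow, Real.sq_sqrt ht.le]; norm_num
      _ ≤ 4 * (2 * (√τ ^ 2 + dist x y ^ 2) / t) := by gcongr; exact add_sq_le
      _ = 8 * ((τ + dist x y ^ 2) / t) := by rw [Real.sq_sqrt hτ.le]; ring
  calc μ.real (ball x √τ) ≤ μ.real (ball y (√τ + dist x y)) :=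
        h.measureReal_ball_mono (by positivity) (ball_subset_ball' le_rfl)
    _ ≤ (2 * ((√τ + dist x y) / √t)) ^ D * μ.real (ball y √t) :=
        h.measureReal_ball_le_rpow_mul y (Real.sqrt_pos.2 ht) hR
    _ = ((2 * ((√τ + dist x y) / √t)) ^ 2) ^ (D / 2) * μ.real (ball y √t) := by
        rw [← Real.rpow_natCast_mul (by positivity), Nat.cast_ofNat, mul_div_cancel₀ D two_ne_zero]
    _ ≤ (8 * ((τ + dist x y ^ 2) / t)) ^ (D / 2) * μ.real (ball y √t) := by gcongr

lemma inv_measureReal_ball_sqrt_le (h : HasDoublingDim μ D) (x y : M) (ht : 0 < t)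
    (htτ : t ≤ τ) :
    (μ.real (ball y √t))⁻¹ ≤
      8 ^ (D / 2) * (1 + dist x y ^ 2 / τ) ^ (D / 2) * (τ / t) ^ (D / 2) *
        (μ.real (ball x √τ))⁻¹ := by
  have hτ : 0 < τ := ht.trans_le htτ
  have hVτ := h.measureReal_ball_pos x (Real.sqrt_pos.2 hτ)
  have hVt := h.measureReal_ball_pos y (Real.sqrt_pos.2 ht)
  have hsplit : 8 * ((τ + dist x y ^ 2) / t) = 8 * (1 + dist x y ^ 2 / τ) * (τ / t) := by
    field_simp
  have hV := h.measureReal_ball_sqrt_le x y ht htτ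
  rw [hsplit, Real.mul_rpow (by positivity) (by positivity),
    Real.mul_rpow (by positivity) (by positivity)] at hV
  rw [← div_eq_mul_inv, le_div_iff₀ hVτ, inv_mul_le_iff₀ hVt, mul_comm]
  exact hV

end Volume

end HasDoublingDim

/-- An upper bound for the total mass of `Gker μ 1 β t x` when `μ` has doubling dimension at most
`D < 2 * β`: the sum over `k` of `4 ^ β * 4 ^ (-kβ)`, which bounds `(1 + d²/t) ^ (-β)` on the `k`-th
dyadic shell, times the relative volume `2 ^ (kD)` of the `k`-th dyadic ball. -/
noncomputable def gkerMassBound (D β : ℝ) : ℝ :=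
  4 ^ β * (1 - 2 ^ (D - 2 * β))⁻¹

lemma gkerMassBound_nonneg {D β : ℝ} (hβ : D ≤ 2 * β) : 0 ≤ gkerMassBound D β :=
  mul_nonneg (by positivity) (inv_nonneg.2 (sub_nonneg.2
    (Real.rpow_le_one_of_one_le_of_nonpos one_le_two (sub_nonpos.2 hβ))))

lemma hasSum_gkerMassBound {D β : ℝ} (hβ : D < 2 * β) :
    HasSum (fun k : ℕ ↦ (4 : ℝ) ^ β * (4 ^ (-β)) ^ k * (2 ^ D) ^ k) (gkerMassBound D β) := by
  have hratio : (4 : ℝ) ^ (-β) * 2 ^ D = 2 ^ (D - 2 * β) := by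
    rw [show (4 : ℝ) = 2 ^ (2 : ℝ) by norm_num, ← Real.rpow_mul zero_le_two,
      ← Real.rpow_add two_pos]
    ring_nf
  simp only [mul_assoc, ← mul_pow, hratio]
  exact (hasSum_geometric_of_lt_one (by positivity)
    (Real.rpow_lt_one_of_one_lt_of_neg one_lt_two (sub_neg.2 hβ))).mul_left _

section DyadicBalls

variable {M : Type*} [PseudoMetricSpace M] {t β : ℝ}

lemma exists_mem_ball_two_pow_mul_sqrt (x y : M) (ht : 0 < t) :
    ∃ k : ℕ, y ∈ ball x (2 ^ k * √t) ∧ 4 ^ k ≤ 4 * (1 + dist x y ^ 2 / t) := by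
  have hone : 1 ≤ 1 + dist x y ^ 2 / t := le_add_of_nonneg_right (by positivity)
  obtain ⟨k, hk, hk'⟩ := exists_nat_pow_near hone (by norm_num : (1 : ℝ) < 4)
  refine ⟨k + 1, ?_, by rw [pow_succ']; gcongr⟩
  rw [mem_ball']
  refine lt_of_pow_lt_pow_left₀ 2 (by positivity) ?_
  calc dist x y ^ 2 < 4 ^ (k + 1) * t := (div_lt_iff₀ ht).1 (by linarith)
    _ = (2 ^ (k + 1) * √t) ^ 2 := by
        rw [mul_pow, Real.sq_sqrt ht.le, pow_right_comm]; norm_num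

lemma ofReal_one_add_dist_sq_div_rpow_neg_le_tsum (x y : M) (ht : 0 < t) (hβ : 0 ≤ β) :
    ENNReal.ofReal ((1 + dist x y ^ 2 / t) ^ (-β)) ≤
      ∑' k : ℕ, (ball x (2 ^ k * √t)).indicator
        (fun _ ↦ ENNReal.ofReal (4 ^ β * (4 ^ (-β)) ^ k)) y := by
  obtain ⟨k, hmem, hk⟩ := exists_mem_ball_two_pow_mul_sqrt x y ht
  refine le_trans ?_ (ENNReal.le_tsum k)
  rw [Set.indicator_of_mem hmem, Real.rpow_pow_comm (by norm_num)]
  exact ENNReal.ofReal_le_ofReal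
    (rpow_neg_le_mul_rpow_neg (by positivity) (by positivity) hβ hk)

lemma HasDoublingDim.lintegral_one_add_dist_sq_div_rpow_neg_le [MeasurableSpace M]
    [OpensMeasurableSpace M] {μ : Measure M} {D : ℝ} (h : HasDoublingDim μ D) (x : M) (ht : 0 < t)
    (hβ : D < 2 * β) :
    ∫⁻ y, ENNReal.ofReal ((1 + dist x y ^ 2 / t) ^ (-β)) ∂μ ≤
      ENNReal.ofReal (gkerMassBound D β * μ.real (ball x √t)) := by
  have hβ₀ : 0 ≤ β := by linarith [h.dim_nonneg x]
  have hr : 0 < √t := Real.sqrt_pos.2 ht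
  have hsum := (hasSum_gkerMassBound hβ).mul_right (μ.real (ball x √t))
  have hterm (k : ℕ) : ENNReal.ofReal (4 ^ β * (4 ^ (-β)) ^ k) * μ (ball x (2 ^ k * √t)) ≤
      ENNReal.ofReal (4 ^ β * (4 ^ (-β)) ^ k * (2 ^ D) ^ k * μ.real (ball x √t)) := by
    rw [← ofReal_measureReal (h.measure_ball_lt_top x (by positivity)).ne,
      ← ENNReal.ofReal_mul (by positivity), mul_assoc (_ * _)]
    gcongr
    exact h.measureReal_ball_two_pow_mul_le x hr k
  calc ∫⁻ y, ENNReal.ofReal ((1 + dist x y ^ 2 / t) ^ (-β)) ∂μ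
      ≤ ∫⁻ y, ∑' k : ℕ, (ball x (2 ^ k * √t)).indicator
          (fun _ ↦ ENNReal.ofReal (4 ^ β * (4 ^ (-β)) ^ k)) y ∂μ :=
        lintegral_mono fun y ↦ ofReal_one_add_dist_sq_div_rpow_neg_le_tsum x y ht hβ₀
    _ = ∑' k : ℕ, ENNReal.ofReal (4 ^ β * (4 ^ (-β)) ^ k) * μ (ball x (2 ^ k * √t)) := by
        rw [lintegral_tsum fun k ↦ (measurable_const.indicator measurableSet_ball).aemeasurable]
        simp only [lintegral_indicator_const measurableSet_ball]
    _ ≤ ∑' k : ℕ,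
          ENNReal.ofReal (4 ^ β * (4 ^ (-β)) ^ k * (2 ^ D) ^ k * μ.real (ball x √t)) :=
        ENNReal.tsum_le_tsum hterm
    _ = ENNReal.ofReal (gkerMassBound D β * μ.real (ball x √t)) := by
        rw [← ENNReal.ofReal_tsum_of_nonneg (fun k ↦ by positivity) hsum.summable, hsum.tsum_eq]

end DyadicBalls

section Kernel

variable {M : Type*} [MetricSpace M] [MeasurableSpace M] {μ : Measure M}
  {D ℓ β c c' s t τ : ℝ}

lemma Gker_nonneg (hc : 0 ≤ c) (ht : 0 ≤ t) (x y : M) : 0 ≤ Gker μ c ℓ t x y := by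
  unfold Gker
  positivity

lemma measurable_Gker [OpensMeasurableSpace M] (x : M) : Measurable (Gker μ c ℓ t x) := by
  unfold Gker
  fun_prop

lemma Gker_one_eq (x y : M) :
    Gker μ 1 ℓ t x y = (μ.real (ball x √t))⁻¹ * (1 + dist x y ^ 2 / t) ^ (-ℓ) := by
  rw [Gker, one_mul, measureReal_def]

lemma Gker_le_mul_Gker (hc : 0 < c) (hc' : 0 < c') (hℓ : 0 ≤ ℓ) (ht : 0 < t) (x y : M) :
    Gker μ c ℓ t x y ≤ max 1 (c' / c) ^ ℓ * Gker μ c' ℓ t x y := by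
  have hbase : 1 + c' * dist x y ^ 2 / t ≤ max 1 (c' / c) * (1 + c * dist x y ^ 2 / t) := by
    calc 1 + c' * dist x y ^ 2 / t = 1 + c' / c * (c * dist x y ^ 2 / t) := by field_simp
      _ ≤ max 1 (c' / c) + max 1 (c' / c) * (c * dist x y ^ 2 / t) := by
          gcongr
          exacts [le_max_left _ _, le_max_right _ _]
      _ = max 1 (c' / c) * (1 + c * dist x y ^ 2 / t) := by ring
  unfold Gker
  rw [mul_left_comm]
  gcongr
  exact rpow_neg_le_mul_rpow_neg (by positivity) (by positivity) hℓ hbase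

lemma one_add_dist_sq_div_rpow_mul_Gker_one (α : ℝ) (ht : 0 ≤ t) (x y : M) :
    (1 + dist x y ^ 2 / t) ^ α * Gker μ 1 ℓ t x y = Gker μ 1 (ℓ - α) t x y := by
  rw [Gker_one_eq, Gker_one_eq, mul_left_comm, ← Real.rpow_add (by positivity)]
  ring_nf

namespace HasDoublingDim

lemma Gker_one_le_mul_Gker_one_swap (h : HasDoublingDim μ D) (ht : 0 < t) (x y : M) :
    Gker μ 1 ℓ t x y ≤ 8 ^ (D / 2) * Gker μ 1 (ℓ - D / 2) t y x := by
  have hV := h.inv_measureReal_ball_sqrt_le y x ht le_rfl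
  rw [div_self ht.ne', Real.one_rpow, mul_one] at hV
  rw [← one_add_dist_sq_div_rpow_mul_Gker_one (D / 2) ht.le, Gker_one_eq, Gker_one_eq,
    dist_comm x y, ← mul_assoc, ← mul_assoc]
  gcongr

lemma Gker_one_le_mul_Gker_one_of_le (h : HasDoublingDim μ D) (hℓ : D / 2 ≤ ℓ) (ht : 0 < t)
    (htτ : t ≤ τ) {x y z w : M} (hdom : τ + dist x z ^ 2 ≤ 4 * (t + dist y w ^ 2)) :
    Gker μ 1 ℓ t y w ≤
      8 ^ (D / 2) * 4 ^ ℓ * (1 + dist x y ^ 2 / τ) ^ (D / 2) * Gker μ 1 ℓ τ x z := by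
  have hτ : 0 < τ := ht.trans_le htτ
  have hℓ₀ : 0 ≤ ℓ := (div_nonneg (h.dim_nonneg x) zero_le_two).trans hℓ
  have hV := h.inv_measureReal_ball_sqrt_le x y ht htτ
  have hdecay := div_rpow_mul_one_add_div_rpow_neg_le ht htτ (sq_nonneg (dist y w))
    (sq_nonneg (dist x z)) hℓ hℓ₀ hdom
  set A := 8 ^ (D / 2) * (1 + dist x y ^ 2 / τ) ^ (D / 2) with hA
  calc Gker μ 1 ℓ t y w = (μ.real (ball y √t))⁻¹ * (1 + dist y w ^ 2 / t) ^ (-ℓ) :=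
        Gker_one_eq y w
    _ ≤ A * (τ / t) ^ (D / 2) * (μ.real (ball x √τ))⁻¹ * (1 + dist y w ^ 2 / t) ^ (-ℓ) := by
        gcongr
    _ = A * (μ.real (ball x √τ))⁻¹ * ((τ / t) ^ (D / 2) * (1 + dist y w ^ 2 / t) ^ (-ℓ)) := by
        ring
    _ ≤ A * (μ.real (ball x √τ))⁻¹ * (4 ^ ℓ * (1 + dist x z ^ 2 / τ) ^ (-ℓ)) := by gcongr
    _ = 8 ^ (D / 2) * 4 ^ ℓ * (1 + dist x y ^ 2 / τ) ^ (D / 2) * Gker μ 1 ℓ τ x z := by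
        rw [Gker_one_eq, hA]; ring

lemma Gker_one_mul_Gker_one_le_of_le_left (h : HasDoublingDim μ D) (hℓ : D / 2 ≤ ℓ) (ht : 0 < t)
    (hs : 0 < s) {x y z : M} (hdom : t + s + dist x z ^ 2 ≤ 4 * (t + dist x y ^ 2)) :
    Gker μ 1 ℓ t x y * Gker μ 1 ℓ s y z ≤
      8 ^ D * 4 ^ ℓ * Gker μ 1 ℓ (t + s) x z * Gker μ 1 (ℓ - D / 2) s z y := by
  have hxy : Gker μ 1 ℓ t x y ≤ 8 ^ (D / 2) * 4 ^ ℓ * Gker μ 1 ℓ (t + s) x z := by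
    simpa using h.Gker_one_le_mul_Gker_one_of_le hℓ ht (le_add_of_nonneg_right hs.le) hdom
  calc Gker μ 1 ℓ t x y * Gker μ 1 ℓ s y z
      ≤ 8 ^ (D / 2) * 4 ^ ℓ * Gker μ 1 ℓ (t + s) x z *
          (8 ^ (D / 2) * Gker μ 1 (ℓ - D / 2) s z y) :=
        mul_le_mul hxy (h.Gker_one_le_mul_Gker_one_swap hs y z)
          (Gker_nonneg zero_le_one hs.le y z)
          (mul_nonneg (by positivity) (Gker_nonneg zero_le_one (by positivity) x z))
    _ = 8 ^ (D / 2 + D / 2) * 4 ^ ℓ * Gker μ 1 ℓ (t + s) x z * Gker μ 1 (ℓ - D / 2) s z y := by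
        rw [Real.rpow_add (by norm_num)]; ring
    _ = 8 ^ D * 4 ^ ℓ * Gker μ 1 ℓ (t + s) x z * Gker μ 1 (ℓ - D / 2) s z y := by
        rw [add_halves]

lemma Gker_one_mul_Gker_one_le_of_le_right (h : HasDoublingDim μ D) (hℓ : D / 2 ≤ ℓ) (ht : 0 < t)
    (hs : 0 < s) {x y z : M} (hdom : t + s + dist x z ^ 2 ≤ 4 * (s + dist y z ^ 2)) :
    Gker μ 1 ℓ t x y * Gker μ 1 ℓ s y z ≤
      8 ^ (D / 2) * 4 ^ ℓ * Gker μ 1 ℓ (t + s) x z * Gker μ 1 (ℓ - D / 2) t x y := by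
  have hD := h.dim_nonneg x
  have hGxy : 0 ≤ Gker μ 1 ℓ t x y := Gker_nonneg zero_le_one ht.le x y
  have hGxz : 0 ≤ Gker μ 1 ℓ (t + s) x z := Gker_nonneg zero_le_one (by positivity) x z
  have hyz : Gker μ 1 ℓ s y z ≤ 8 ^ (D / 2) * 4 ^ ℓ * (1 + dist x y ^ 2 / t) ^ (D / 2) *
      Gker μ 1 ℓ (t + s) x z := by
    refine (h.Gker_one_le_mul_Gker_one_of_le hℓ hs (le_add_of_nonneg_left ht.le) hdom).trans ?_
    gcongr
    exact le_add_of_nonneg_right hs.le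
  calc Gker μ 1 ℓ t x y * Gker μ 1 ℓ s y z
      ≤ Gker μ 1 ℓ t x y * (8 ^ (D / 2) * 4 ^ ℓ * (1 + dist x y ^ 2 / t) ^ (D / 2) *
          Gker μ 1 ℓ (t + s) x z) := by gcongr
    _ = 8 ^ (D / 2) * 4 ^ ℓ * Gker μ 1 ℓ (t + s) x z *
          ((1 + dist x y ^ 2 / t) ^ (D / 2) * Gker μ 1 ℓ t x y) := by ring
    _ = 8 ^ (D / 2) * 4 ^ ℓ * Gker μ 1 ℓ (t + s) x z * Gker μ 1 (ℓ - D / 2) t x y := by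
        rw [one_add_dist_sq_div_rpow_mul_Gker_one (D / 2) ht.le]

lemma Gker_one_mul_Gker_one_le (h : HasDoublingDim μ D) (hℓ : D / 2 ≤ ℓ) (ht : 0 < t)
    (hs : 0 < s) (x y z : M) :
    Gker μ 1 ℓ t x y * Gker μ 1 ℓ s y z ≤
      8 ^ D * 4 ^ ℓ * Gker μ 1 ℓ (t + s) x z *
        (Gker μ 1 (ℓ - D / 2) t x y + Gker μ 1 (ℓ - D / 2) s z y) := by
  have hD := h.dim_nonneg x
  have hGxy : 0 ≤ Gker μ 1 (ℓ - D / 2) t x y := Gker_nonneg zero_le_one ht.le x y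
  have hGzy : 0 ≤ Gker μ 1 (ℓ - D / 2) s z y := Gker_nonneg zero_le_one hs.le z y
  have hGxz : 0 ≤ Gker μ 1 ℓ (t + s) x z := Gker_nonneg zero_le_one (by positivity) x z
  have hsum : t + s + dist x z ^ 2 ≤ 2 * (t + dist x y ^ 2) + 2 * (s + dist y z ^ 2) := by
    have htri : dist x z ^ 2 ≤ 2 * (dist x y ^ 2 + dist y z ^ 2) :=
      (pow_le_pow_left₀ dist_nonneg (dist_triangle x y z) 2).trans add_sq_le
    linarith
  rcases le_total (s + dist y z ^ 2) (t + dist x y ^ 2) with hle | hle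
  · refine (h.Gker_one_mul_Gker_one_le_of_le_left hℓ ht hs (by linarith)).trans ?_
    gcongr
    exact le_add_of_nonneg_left hGxy
  · refine (h.Gker_one_mul_Gker_one_le_of_le_right hℓ ht hs (by linarith)).trans ?_
    gcongr
    · norm_num
    · exact half_le_self hD
    · exact le_add_of_nonneg_right hGzy

variable [OpensMeasurableSpace M]

lemma lintegral_Gker_one_le (h : HasDoublingDim μ D) (hβ : D < 2 * β) (ht : 0 < t) (x : M) :
    ∫⁻ y, ENNReal.ofReal (Gker μ 1 β t x y) ∂μ ≤
      ENNReal.ofReal (gkerMassBound D β) := by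
  have hV := h.measureReal_ball_pos x (Real.sqrt_pos.2 ht)
  have hinv : 0 ≤ (μ.real (ball x √t))⁻¹ := inv_nonneg.2 hV.le
  simp only [Gker_one_eq, ENNReal.ofReal_mul hinv]
  rw [lintegral_const_mul' _ _ ENNReal.ofReal_ne_top]
  refine (mul_le_mul_right
    (h.lintegral_one_add_dist_sq_div_rpow_neg_le x ht hβ) _).trans_eq ?_
  rw [← ENNReal.ofReal_mul hinv]
  congr 1
  field_simp

lemma lintegral_Gker_one_mul_Gker_one_le (h : HasDoublingDim μ D) (hℓ : D < ℓ) (ht : 0 < t)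
    (hs : 0 < s) (x z : M) :
    ∫⁻ y, ENNReal.ofReal (Gker μ 1 ℓ t x y * Gker μ 1 ℓ s y z) ∂μ ≤
      ENNReal.ofReal (8 ^ D * 4 ^ ℓ * (2 * gkerMassBound D (ℓ - D / 2)) *
        Gker μ 1 ℓ (t + s) x z) := by
  have hD := h.dim_nonneg x
  set β := ℓ - D / 2 with hβ
  have hDβ : D < 2 * β := by linarith
  set I := gkerMassBound D β
  have hI₀ : 0 ≤ I := gkerMassBound_nonneg hDβ.le
  set A := 8 ^ D * 4 ^ ℓ * Gker μ 1 ℓ (t + s) x z with hA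
  have hA₀ : 0 ≤ A := mul_nonneg (by positivity) (Gker_nonneg zero_le_one (by positivity) x z)
  calc ∫⁻ y, ENNReal.ofReal (Gker μ 1 ℓ t x y * Gker μ 1 ℓ s y z) ∂μ
      ≤ ∫⁻ y, ENNReal.ofReal A *
          (ENNReal.ofReal (Gker μ 1 β t x y) + ENNReal.ofReal (Gker μ 1 β s z y)) ∂μ := by
        refine lintegral_mono fun y ↦ ?_
        rw [← ENNReal.ofReal_add (Gker_nonneg zero_le_one ht.le x y)
          (Gker_nonneg zero_le_one hs.le z y), ← ENNReal.ofReal_mul hA₀]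
        exact ENNReal.ofReal_le_ofReal
          (h.Gker_one_mul_Gker_one_le (by linarith) ht hs x y z)
    _ = ENNReal.ofReal A * (∫⁻ y, ENNReal.ofReal (Gker μ 1 β t x y) ∂μ +
          ∫⁻ y, ENNReal.ofReal (Gker μ 1 β s z y) ∂μ) := by
        rw [lintegral_const_mul' _ _ ENNReal.ofReal_ne_top,
          lintegral_add_left (measurable_Gker x).ennreal_ofReal]
    _ ≤ ENNReal.ofReal A * (ENNReal.ofReal I + ENNReal.ofReal I) := by
        gcongr
        exacts [h.lintegral_Gker_one_le hDβ ht x, h.lintegral_Gker_one_le hDβ hs z]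
    _ = ENNReal.ofReal (8 ^ D * 4 ^ ℓ * (2 * I) * Gker μ 1 ℓ (t + s) x z) := by
        rw [← ENNReal.ofReal_add hI₀ hI₀, ← ENNReal.ofReal_mul hA₀, hA]
        ring_nf

end HasDoublingDim

end Kernel

theorem stmt4_general {D ℓ c c' : ℝ} (hℓ : D < ℓ) (hc : 0 < c) (hc' : 0 < c') :
    ∃ C : ℝ, 0 ≤ C ∧
      ∀ (M : Type*) [MetricSpace M] [MeasurableSpace M] [OpensMeasurableSpace M] (μ : Measure M),
        HasDoublingDim μ D → ∀ s t : ℝ, 0 < s → 0 < t → ∀ x z : M,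
          ∫⁻ y, ENNReal.ofReal (Gker μ c ℓ t x y * Gker μ c ℓ s y z) ∂μ ≤
            ENNReal.ofReal (C * Gker μ c' ℓ (t + s) x z) := by
  set K : ℝ := 8 ^ D * 4 ^ ℓ * (2 * gkerMassBound D (ℓ - D / 2))
  have hK₀ : 0 ≤ K := by
    have hI₀ : 0 ≤ gkerMassBound D (ℓ - D / 2) := gkerMassBound_nonneg (by linarith)
    positivity
  set m : ℝ := max 1 (1 / c) ^ ℓ
  set m' : ℝ := max 1 (c' / 1) ^ ℓ
  have hm₀ : 0 ≤ m := by positivity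
  refine ⟨m * m * K * m', by positivity, fun M _ _ _ μ h s t hs ht x z ↦ ?_⟩
  have hℓ₀ : 0 ≤ ℓ := (h.dim_nonneg x).trans hℓ.le
  have hpointwise (y : M) : Gker μ c ℓ t x y * Gker μ c ℓ s y z ≤
      m * m * (Gker μ 1 ℓ t x y * Gker μ 1 ℓ s y z) := by
    rw [mul_mul_mul_comm]
    exact mul_le_mul (Gker_le_mul_Gker hc one_pos hℓ₀ ht x y)
      (Gker_le_mul_Gker hc one_pos hℓ₀ hs y z) (Gker_nonneg hc.le hs.le y z)
      (mul_nonneg hm₀ (Gker_nonneg zero_le_one ht.le x y))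
  calc ∫⁻ y, ENNReal.ofReal (Gker μ c ℓ t x y * Gker μ c ℓ s y z) ∂μ
      ≤ ∫⁻ y, ENNReal.ofReal (m * m) *
          ENNReal.ofReal (Gker μ 1 ℓ t x y * Gker μ 1 ℓ s y z) ∂μ := by
        refine lintegral_mono fun y ↦ ?_
        rw [← ENNReal.ofReal_mul (by positivity)]
        exact ENNReal.ofReal_le_ofReal (hpointwise y)
    _ ≤ ENNReal.ofReal (m * m) * ENNReal.ofReal (K * Gker μ 1 ℓ (t + s) x z) := by
        rw [lintegral_const_mul' _ _ ENNReal.ofReal_ne_top]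
        gcongr
        exact h.lintegral_Gker_one_mul_Gker_one_le hℓ ht hs x z
    _ ≤ ENNReal.ofReal (m * m * K * m' * Gker μ c' ℓ (t + s) x z) := by
        rw [← ENNReal.ofReal_mul (by positivity), mul_assoc (m * m * K), mul_assoc (m * m)]
        gcongr
        exact Gker_le_mul_Gker one_pos hc' hℓ₀ (by positivity) x z

/-- Chapman–Kolmogorov estimate for the reference Gaussian kernels: there is `ℓ₀ > 0`
depending only on the doubling constant `C_D` such that for every `ℓ ≥ ℓ₀` and `c > 0`
there are `c' > 0` and `C ≥ 0` with
`∫_M G_t^{c,ℓ}(x,y) G_s^{c,ℓ}(y,z) μ(dy) ≤ C · G_{t+s}^{c',ℓ}(x,z)`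
for all `s, t ∈ (0,1]` and `x, z ∈ M`. -/
theorem stmt4 (C_D : ℝ≥0) (hC_D : 1 ≤ C_D) :
    ∃ ℓ₀ : ℝ, 0 < ℓ₀ ∧
      ∀ (M : Type) [MetricSpace M] [CompactSpace M] [MeasurableSpace M] [BorelSpace M]
        (μ : Measure M),
        (∀ (x : M) (ρ : ℝ), 0 < ρ → 0 < μ (ball x ρ) ∧ μ (ball x ρ) < ⊤) →
        (∀ (x : M) (ρ : ℝ), 0 < ρ → μ (ball x (2 * ρ)) ≤ C_D * μ (ball x ρ)) →
        ∀ ℓ, ℓ₀ ≤ ℓ → ∀ c : ℝ, 0 < c →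
          ∃ c' : ℝ, 0 < c' ∧ ∃ C : ℝ, 0 ≤ C ∧
            ∀ s ∈ Set.Ioc (0 : ℝ) 1, ∀ t ∈ Set.Ioc (0 : ℝ) 1, ∀ x z : M,
              (∫⁻ y, ENNReal.ofReal (Gker μ c ℓ t x y * Gker μ c ℓ s y z) ∂μ) ≤
                ENNReal.ofReal (C * Gker μ c' ℓ (t + s) x z) := by
  refine ⟨Real.logb 2 C_D + 1,
    add_pos_of_nonneg_of_pos (Real.logb_nonneg one_lt_two (by exact_mod_cast hC_D)) one_pos, ?_⟩
  intro M _ _ _ _ μ hball hdouble ℓ hℓ c hc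
  obtain ⟨C, hC, hbound⟩ := stmt4_general (lt_of_lt_of_le (lt_add_one _) hℓ) hc hc
  have hμ := HasDoublingDim.of_measure_ball_two_mul_le (zero_lt_one.trans_le hC_D) hball hdouble
  exact ⟨c, hc, C, hC, fun s hs t ht ↦ hbound M μ hμ s t hs.1 ht.1⟩
end
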